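/- Let ψ ∈ ℂ² ⊗ ℂ² be a unit vector (a pure two-qubit state shared by Alice and Bob), let ρ^B = Tr_A(ψψᴴ) have Bloch vector (r_x,r_y,r_z), and let σ be a qubit density matrix with Bloch vector (s_x,s_y,s_z), s := √(s_x²+s_y²) > 0. Consider all assisted conversion protocols consisting of a finite POVM (M_i) on Alice's qubit (each M_i Hermitian with M_i ⪰ 0 and ∑_i M_i = I) together with, for each outcome i, a finite family (K_{i,n}) of incoherent 2×2 Kraus operators with ∑_n K_{i,n}ᴴK_{i,n} ⪯ I such that ∑_n K_{i,n}·Tr_A[(M_i ⊗ I)·ψψᴴ]·K_{i,n}ᴴ = c_i·σ for some reals c_i ≥ 0; the success probability of the protocol is ∑_i c_i. The supremum of the success probability over all such protocols equals min{ 1, (1 − |r_z|)·(1 + √(1−s²))/s² }. -/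

import Mathlib

open Matrix BigOperators
open scoped Kronecker Classical ComplexOrder

/-- The qubit state with Bloch vector `(rx, ry, rz)`:
`ρ = (1/2)(I + rx σx + ry σy + rz σz)`. -/
noncomputable def blochState (rx ry rz : ℝ) : Matrix (Fin 2) (Fin 2) ℂ :=
  !![(1 + rz : ℂ)/2, ((rx : ℂ) - ry * Complex.I)/2;
     ((rx : ℂ) + ry * Complex.I)/2, (1 - rz : ℂ)/2]

/-- `K` is an incoherent Kraus operator: every column has at most one nonzero entry. -/
def IsIncoherentKraus {d : ℕ} (K : Matrix (Fin d) (Fin d) ℂ) : Prop :=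
  ∀ j i i', K i j ≠ 0 → K i' j ≠ 0 → i = i'

/-- `K` is a strictly incoherent Kraus operator: every row and every column
has at most one nonzero entry. -/
def IsSIKraus {d : ℕ} (K : Matrix (Fin d) (Fin d) ℂ) : Prop :=
  (∀ i j j', K i j ≠ 0 → K i j' ≠ 0 → j = j') ∧
  (∀ j i i', K i j ≠ 0 → K i' j ≠ 0 → i = i')

/-- Partial trace over the first (A) factor. -/
noncomputable def ptraceA {dA dB : ℕ} (X : Matrix (Fin dA × Fin dB) (Fin dA × Fin dB) ℂ) :
    Matrix (Fin dB) (Fin dB) ℂ :=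
  fun j j' => ∑ i, X (i, j) (i, j')

/-- Partial trace over the second (B) factor. -/
noncomputable def ptraceB {dA dB : ℕ} (X : Matrix (Fin dA × Fin dB) (Fin dA × Fin dB) ℂ) :
    Matrix (Fin dA) (Fin dA) ℂ :=
  fun i i' => ∑ j, X (i, j) (i', j)

/-- The completely dephasing map: keep the diagonal of `X`. -/
noncomputable def dephase {d : ℕ} (X : Matrix (Fin d) (Fin d) ℂ) : Matrix (Fin d) (Fin d) ℂ :=
  Matrix.diagonal X.diag

/-!
Write `κ = √(1 - s²)`, so that `(1 + κ) / s² = 1 / (1 - κ)`, and let `p₀`, `p₁` be the diagonal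
entries of `ρᴮ`; the claim is that `x ∈ [0, 1]` is attainable iff `x (1 - κ) ≤ 2 pⱼ` for both `j`.

Necessity: an incoherent Kraus operator on a qubit either kills the coherence or acts on the
diagonal as a rescaled permutation, so that `|X₀₁|² ≤ a₀ a₁` with `aⱼ ≤ (Kᴴ K)ⱼⱼ Wⱼⱼ`. By
Cauchy–Schwarz over the Kraus operators, a bound of this form survives summation; combined with
`a₀ + a₁ ≤ c` it gives `c (1 - κ) ≤ 2 Wⱼⱼ`, which is linear and hence sums over Alice's outcomes.

Sufficiency: writing `Ψ` for the coefficient matrix of `ψ`, Alice measures in a basis mutually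
unbiased to an eigenbasis of the traceless Hermitian matrix `Ψ diag(p₁, -p₀) Ψᴴ`. Each outcome
leaves Bob in a pure state whose diagonal is proportional to that of `ρᴮ`. The target is a mixture
of the two pure states with Bloch vectors `(s_x, s_y, ±κ)`, and Bob reaches each of them by
rescaling the basis, with or without a flip.
-/

section UnitaryConjugation

lemma mul_diagonal_mul_conjTranspose_apply_self {m n : Type*} [Fintype n] [DecidableEq n]
    (A : Matrix m n ℂ) (d : n → ℝ) (i : m) :
    (A * diagonal (fun j => (d j : ℂ)) * Aᴴ) i i =
      ((∑ j, Complex.normSq (A i j) * d j : ℝ) : ℂ) := by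
  rw [mul_apply, Complex.ofReal_sum]
  refine Finset.sum_congr rfl fun j _ => ?_
  rw [mul_diagonal, conjTranspose_apply, Complex.ofReal_mul, ← Complex.mul_conj, Complex.star_def]
  ring

lemma exists_unitary_normSq_eq_inv_card (n : Type*) [Fintype n] [DecidableEq n] :
    ∃ F ∈ unitaryGroup n ℂ, ∀ i j, Complex.normSq (F i j) = (Fintype.card n : ℝ)⁻¹ := by
  rcases isEmpty_or_nonempty n with _ | _
  · exact ⟨1, one_mem _, fun i => isEmptyElim i⟩
  set N := Fintype.card n
  have : NeZero N := ⟨Fintype.card_ne_zero⟩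
  let e : n ≃ ZMod N := Fintype.equivOfCardEq (ZMod.card N).symm
  let χ : AddChar (ZMod N) ℂ := ZMod.stdAddChar
  have hχ (x y : ZMod N) : star (χ x) * χ y = χ (y - x) := by
    rw [sub_eq_add_neg, AddChar.map_add_eq_mul, AddChar.map_neg_eq_conj, mul_comm]
    rfl
  have horth (j j' : n) : ∑ k, χ (e k * (e j' - e j)) = if j = j' then (N : ℂ) else 0 := by
    rw [e.sum_comp fun x => χ (x * (e j' - e j)),
      AddChar.sum_mulShift _ (ZMod.isPrimitive_stdAddChar N), ZMod.card]
    simp only [sub_eq_zero, e.apply_eq_iff_eq, eq_comm (a := j), Nat.cast_ite, Nat.cast_zero]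
  have hsqrt : ((√N : ℝ) : ℂ) ^ 2 = N := by
    rw [← Complex.ofReal_pow, Real.sq_sqrt N.cast_nonneg, Complex.ofReal_natCast]
  have hN : (N : ℂ) ≠ 0 := Nat.cast_ne_zero.2 (NeZero.ne N)
  refine ⟨Matrix.of fun i j => χ (e i * e j) / (√N : ℝ), ?_, fun i j => ?_⟩
  · rw [mem_unitaryGroup_iff']
    ext j j'
    calc (star (Matrix.of fun i j => χ (e i * e j) / ((√N : ℝ) : ℂ)) *
            Matrix.of fun i j => χ (e i * e j) / ((√N : ℝ) : ℂ)) j j'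
        = (∑ k, χ (e k * (e j' - e j))) / N := by
          simp only [mul_apply, star_apply, of_apply, Finset.sum_div, star_div₀, Complex.star_def,
            Complex.conj_ofReal, div_mul_div_comm, ← sq, hsqrt]
          simp only [← Complex.star_def, hχ, ← mul_sub]
      _ = (1 : Matrix n n ℂ) j j' := by
          rw [horth, one_apply]
          split_ifs <;> simp [hN]
  · simp [Complex.normSq_eq_norm_sq]

variable {n : Type*} [Fintype n] [DecidableEq n]

lemma sum_normSq_unitary_mul_apply {m : Type*} {U : Matrix n n ℂ}
    (hU : U ∈ unitaryGroup n ℂ) (A : Matrix n m ℂ) (j : m) :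
    ∑ k, Complex.normSq ((U * A) k j) = ∑ k, Complex.normSq (A k j) := by
  have hdiag (B : Matrix n m ℂ) : (Bᴴ * B) j j = ((∑ k, Complex.normSq (B k j) : ℝ) : ℂ) := by
    simp only [mul_apply, conjTranspose_apply, Complex.star_def, ← Complex.normSq_eq_conj_mul_self,
      Complex.ofReal_sum]
  rw [← Complex.ofReal_inj, ← hdiag, ← hdiag, conjTranspose_mul, Matrix.mul_assoc,
    ← Matrix.mul_assoc Uᴴ, ← star_eq_conjTranspose U, mem_unitaryGroup_iff'.1 hU, Matrix.one_mul]

lemma sum_vecMulVec_star_row {U : Matrix n n ℂ}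
    (hU : U ∈ unitaryGroup n ℂ) : ∑ k, vecMulVec (star (U k)) (U k) = 1 := by
  rw [← mem_unitaryGroup_iff'.1 hU]
  ext i j
  simp only [Matrix.sum_apply, vecMulVec_apply, Pi.star_apply, mul_apply, star_apply]

lemma exists_unitary_diag_eq_trace_div_card {A : Matrix n n ℂ} (hA : A.IsHermitian) :
    ∃ U ∈ unitaryGroup n ℂ, ∀ k, (U * A * Uᴴ) k k = A.trace / Fintype.card n := by
  obtain ⟨F, hF, hFsq⟩ := exists_unitary_normSq_eq_inv_card n
  set V := hA.eigenvectorUnitary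
  refine ⟨F * star (V : Matrix n n ℂ), mul_mem hF (star V).2, fun k => ?_⟩
  have hdiag : (star V : Matrix n n ℂ) * A * V =
      diagonal fun j => (hA.eigenvalues j : ℂ) := by
    have := hA.conjStarAlgAut_star_eigenvectorUnitary
    rwa [Unitary.conjStarAlgAut_star_apply] at this
  calc (F * star (V : Matrix n n ℂ) * A * (F * star (V : Matrix n n ℂ))ᴴ) k k
      = (F * (star (V : Matrix n n ℂ) * A * V) * Fᴴ) k k := by
        simp only [← star_eq_conjTranspose, star_mul, star_star, mul_assoc]
    _ = (((Fintype.card n : ℝ)⁻¹ * ∑ j, hA.eigenvalues j : ℝ) : ℂ) := by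
        rw [hdiag, mul_diagonal_mul_conjTranspose_apply_self]
        simp only [hFsq, Finset.mul_sum]
    _ = A.trace / Fintype.card n := by
        rw [hA.trace_eq_sum_eigenvalues, div_eq_inv_mul]
        push_cast
        rfl

-- The rows of `U * Ψ` are balanced exactly when `U (Ψ D Ψᴴ) Uᴴ` has zero diagonal, where
-- `D = diag(p 1, -p 0)` is chosen to make `Ψ D Ψᴴ` traceless.
lemma exists_unitary_normSq_rows_proportional (Ψ : Matrix n (Fin 2) ℂ) :
    ∃ U ∈ unitaryGroup n ℂ, ∀ k j,
      (∑ j', ∑ i, Complex.normSq (Ψ i j')) * Complex.normSq ((U * Ψ) k j) =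
        (∑ i, Complex.normSq (Ψ i j)) * ∑ j', Complex.normSq ((U * Ψ) k j') := by
  set p : Fin 2 → ℝ := fun j => ∑ i, Complex.normSq (Ψ i j)
  set D : Matrix (Fin 2) (Fin 2) ℂ := diagonal fun j => ((![p 1, -p 0] j : ℝ) : ℂ) with hD
  have hdiag (X : Matrix n (Fin 2) ℂ) (k : n) : (X * D * Xᴴ) k k =
      ((p 1 * Complex.normSq (X k 0) - p 0 * Complex.normSq (X k 1) : ℝ) : ℂ) := by
    rw [hD, mul_diagonal_mul_conjTranspose_apply_self, Fin.sum_univ_two, cons_val_zero,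
      cons_val_one, cons_val_fin_one]
    congr 1
    ring
  have hherm : (Ψ * D * Ψᴴ).IsHermitian :=
    isHermitian_mul_mul_conjTranspose Ψ
      (isHermitian_diagonal_of_self_adjoint _ (funext fun j => Complex.conj_ofReal _))
  have htrace : (Ψ * D * Ψᴴ).trace = 0 := by
    simp only [trace, diag_apply, hdiag, ← Complex.ofReal_sum, Finset.sum_sub_distrib,
      ← Finset.mul_sum]
    exact Complex.ofReal_eq_zero.2 (sub_eq_zero.2 (mul_comm (p 1) (p 0)))
  obtain ⟨U, hU, hUdiag⟩ := exists_unitary_diag_eq_trace_div_card hherm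
  have hbalanced (k : n) :
      p 1 * Complex.normSq ((U * Ψ) k 0) = p 0 * Complex.normSq ((U * Ψ) k 1) := by
    have := hUdiag k
    rw [htrace, zero_div] at this
    rw [← sub_eq_zero, ← Complex.ofReal_eq_zero, ← hdiag, ← this]
    simp only [conjTranspose_mul, Matrix.mul_assoc]
  refine ⟨U, hU, fun k => Fin.forall_fin_two.2 ⟨?_, ?_⟩⟩ <;> simp only [Fin.sum_univ_two]
  · linear_combination hbalanced k
  · linear_combination -hbalanced k

end UnitaryConjugation

section QubitStates

lemma trace_blochState (x y z : ℝ) : (blochState x y z).trace = 1 := by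
  simp only [blochState, trace_fin_two_of]
  ring

lemma norm_sq_blochState_offDiag (x y z : ℝ) :
    ‖blochState x y z 0 1‖ ^ 2 = (x ^ 2 + y ^ 2) / 4 := by
  have hentry : blochState x y z 0 1 = (x + (-y : ℝ) * Complex.I) / 2 := by
    simp only [blochState, of_apply, cons_val', cons_val_zero, cons_val_one, cons_val_fin_one]
    push_cast
    ring
  rw [hentry, ← Complex.normSq_eq_norm_sq, Complex.normSq_div, Complex.normSq_add_mul_I,
    Complex.normSq_ofNat]
  ring

lemma smul_blochState_add_smul_blochState (x y z w : ℝ) {a b : ℝ} (hab : a + b = 1) :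
    (a : ℂ) • blochState x y z + (b : ℂ) • blochState x y w =
      blochState x y (a * z + b * w) := by
  have hab' : (a : ℂ) + b = 1 := by exact_mod_cast hab
  simp only [← Matrix.ext_iff, Fin.forall_fin_two, blochState, Matrix.add_apply, Matrix.smul_apply,
    of_apply, cons_val', cons_val_zero, cons_val_one, cons_val_fin_one, smul_eq_mul]
  push_cast
  refine ⟨⟨?_, ?_⟩, ?_, ?_⟩
  · linear_combination hab' / 2
  · linear_combination (x - y * Complex.I) / 2 * hab'
  · linear_combination (x + y * Complex.I) / 2 * hab'
  · linear_combination hab' / 2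

lemma exists_blochState_eq_vecMulVec {x y z : ℝ} (h : x ^ 2 + y ^ 2 + z ^ 2 = 1) :
    ∃ φ : Fin 2 → ℂ, blochState x y z = vecMulVec φ (star φ) := by
  have hz : -1 ≤ z := by nlinarith [sq_nonneg x, sq_nonneg y]
  rcases hz.eq_or_lt with rfl | hz
  · have hx : x = 0 := by nlinarith [sq_nonneg x, sq_nonneg y]
    have hy : y = 0 := by nlinarith [sq_nonneg x, sq_nonneg y]
    subst hx hy
    refine ⟨![0, 1], ?_⟩
    ext i j
    fin_cases i <;> fin_cases j <;> simp [blochState, vecMulVec_apply]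
  · set t := √((1 + z) / 2)
    have ht : 0 < t := Real.sqrt_pos.2 (by linarith)
    have htC : (t : ℂ) ≠ 0 := by exact_mod_cast ht.ne'
    have hz : (z : ℂ) = 2 * t ^ 2 - 1 := by
      have : z = 2 * t ^ 2 - 1 := by rw [Real.sq_sqrt (by linarith)]; ring
      exact_mod_cast this
    have hC : (x : ℂ) ^ 2 + y ^ 2 + z ^ 2 = 1 := by exact_mod_cast h
    refine ⟨![t, (x + y * Complex.I) / (2 * t)], ?_⟩
    simp only [← Matrix.ext_iff, Fin.forall_fin_two, blochState, vecMulVec_apply, of_apply,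
      cons_val', cons_val_zero, cons_val_one, cons_val_fin_one, Pi.star_apply, Complex.star_def,
      map_div₀, map_add, map_mul, map_ofNat, Complex.conj_ofReal, Complex.conj_I]
    refine ⟨⟨?_, ?_⟩, ?_, ?_⟩ <;> field_simp
    · linear_combination hz
    · ring
    · linear_combination -hC + y ^ 2 * Complex.I_sq + (z - 1) * hz

lemma normSq_of_blochState_eq_vecMulVec {x y z : ℝ} {φ : Fin 2 → ℂ}
    (h : blochState x y z = vecMulVec φ (star φ)) :
    Complex.normSq (φ 0) = (1 + z) / 2 ∧ Complex.normSq (φ 1) = (1 - z) / 2 := by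
  have h0 := congrFun₂ h 0 0
  have h1 := congrFun₂ h 1 1
  simp only [blochState, of_apply, cons_val', cons_val_zero, cons_val_one, cons_val_fin_one,
    vecMulVec_apply, Pi.star_apply, Complex.star_def, Complex.mul_conj] at h0 h1
  exact ⟨by exact_mod_cast h0.symm, by exact_mod_cast h1.symm⟩

lemma exists_blochState_eq_smul_vecMulVec_add_smul_vecMulVec {x y z : ℝ}
    (h : x ^ 2 + y ^ 2 + z ^ 2 ≤ 1) :
    ∃ (φ χ : Fin 2 → ℂ) (a b : ℝ), 0 ≤ a ∧ 0 ≤ b ∧ a + b = 1 ∧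
      blochState x y z = (a : ℂ) • vecMulVec φ (star φ) + (b : ℂ) • vecMulVec χ (star χ) ∧
      blochState x y √(1 - (x ^ 2 + y ^ 2)) = vecMulVec φ (star φ) ∧
      blochState x y (-√(1 - (x ^ 2 + y ^ 2))) = vecMulVec χ (star χ) := by
  set κ := √(1 - (x ^ 2 + y ^ 2))
  have hκ0 : 0 ≤ κ := Real.sqrt_nonneg _
  have hκ2 : κ ^ 2 = 1 - (x ^ 2 + y ^ 2) := Real.sq_sqrt (by nlinarith [sq_nonneg z])
  obtain ⟨φ, hφ⟩ := exists_blochState_eq_vecMulVec (x := x) (y := y) (z := κ) (by linarith)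
  obtain ⟨χ, hχ⟩ := exists_blochState_eq_vecMulVec (x := x) (y := y) (z := -κ) (by nlinarith)
  obtain ⟨a, b, ha, hb, hab, hz⟩ : z ∈ segment ℝ κ (-κ) := by
    rw [segment_symm, segment_eq_Icc (by linarith)]
    exact abs_le.1 (abs_le_of_sq_le_sq (by linarith) hκ0)
  refine ⟨φ, χ, a, b, ha, hb, hab, ?_, hφ, hχ⟩
  rw [← hφ, ← hχ, smul_blochState_add_smul_blochState _ _ _ _ hab, ← hz, smul_eq_mul, smul_eq_mul]

end QubitStates

section IncoherentConversion

/-- `W` can be taken to `X` by a stochastic incoherent operation, that is, by incoherent Kraus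
operators which together form a trace-nonincreasing map. Neither matrix is normalised: the ratio of
their traces is the success probability. -/
def IsIncoherentlyConvertible {d : ℕ} (W X : Matrix (Fin d) (Fin d) ℂ) : Prop :=
  ∃ (N : ℕ) (K : Fin N → Matrix (Fin d) (Fin d) ℂ),
    (∀ n, IsIncoherentKraus (K n)) ∧
    ((1 : Matrix (Fin d) (Fin d) ℂ) - ∑ n, (K n)ᴴ * K n).PosSemidef ∧
    ∑ n, K n * W * (K n)ᴴ = X

/-- The incoherent Kraus operator that permutes the basis by `π` and rescales it so that `v` is sent
to `w`. Where `v j = 0` the entry is the junk value `w (π j) / 0 = 0`, so `w (π j)` must vanish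
too. -/
noncomputable def permKraus {d : ℕ} (π : Equiv.Perm (Fin d)) (v w : Fin d → ℂ) :
    Matrix (Fin d) (Fin d) ℂ :=
  Matrix.of fun i j => if i = π j then w i / v j else 0

variable {d : ℕ} (π : Equiv.Perm (Fin d)) (v w : Fin d → ℂ)

lemma isIncoherentKraus_permKraus : IsIncoherentKraus (permKraus π v w) := by
  intro j i i' hi hi'
  simp only [permKraus, of_apply, ne_eq, ite_eq_right_iff, Classical.not_imp] at hi hi'
  exact hi.1.trans hi'.1.symm

variable {π v w} in
lemma permKraus_mulVec (h : ∀ j, v j = 0 → w (π j) = 0) : permKraus π v w *ᵥ v = w := by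
  refine funext <| π.surjective.forall.2 fun j => ?_
  simp only [permKraus, mulVec, dotProduct, of_apply, π.apply_eq_iff_eq, ite_mul, zero_mul,
    Finset.sum_ite_eq, Finset.mem_univ, if_true]
  exact div_mul_cancel_of_imp (h j)

lemma permKraus_conjTranspose_mul_self :
    (permKraus π v w)ᴴ * permKraus π v w =
      diagonal fun j => ((Complex.normSq (w (π j)) / Complex.normSq (v j) : ℝ) : ℂ) := by
  ext j j'
  simp only [permKraus, mul_apply, conjTranspose_apply, of_apply, apply_ite star, star_zero,
    ite_mul, zero_mul, Finset.sum_ite_eq', Finset.mem_univ, if_true, π.apply_eq_iff_eq,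
    diagonal_apply]
  split_ifs with h
  · subst h
    rw [Complex.star_def, ← Complex.normSq_eq_conj_mul_self, Complex.normSq_div]
  · rw [mul_zero]

variable {v} in
lemma isIncoherentlyConvertible_vecMulVec_sum {N : ℕ} {w : Fin N → Fin d → ℂ}
    (π : Fin N → Equiv.Perm (Fin d))
    (h : ∀ j, ∑ k, Complex.normSq (w k (π k j)) ≤ Complex.normSq (v j)) :
    IsIncoherentlyConvertible (vecMulVec v (star v)) (∑ k, vecMulVec (w k) (star (w k))) := by
  refine ⟨N, fun k => permKraus (π k) v (w k), fun k => isIncoherentKraus_permKraus _ _ _, ?_, ?_⟩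
  · have hdiag : (1 : Matrix (Fin d) (Fin d) ℂ) -
        ∑ k, (permKraus (π k) v (w k))ᴴ * permKraus (π k) v (w k) =
        diagonal fun j => ((1 - (∑ k, Complex.normSq (w k (π k j))) / Complex.normSq (v j) : ℝ) :
          ℂ) := by
      simp only [permKraus_conjTranspose_mul_self, ← diagonal_one]
      ext i j
      by_cases hij : i = j
      · simp [hij, Matrix.sum_apply, Finset.sum_div]
      · simp [hij, Matrix.sum_apply]
    rw [hdiag]
    exact PosSemidef.diagonal fun j => Complex.zero_le_real.2 <|
      sub_nonneg.2 (div_le_one_of_le₀ (h j) (Complex.normSq_nonneg _))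
  · refine Finset.sum_congr rfl fun k _ => ?_
    have hzero (j : Fin d) (hj : v j = 0) : w k (π k j) = 0 := by
      have hle := (Finset.single_le_sum (fun k _ => Complex.normSq_nonneg (w k (π k j)))
        (Finset.mem_univ k)).trans (h j)
      rw [hj, Complex.normSq_zero] at hle
      exact Complex.normSq_eq_zero.1 (hle.antisymm (Complex.normSq_nonneg _))
    rw [mul_vecMulVec, vecMulVec_mul, ← star_mulVec, permKraus_mulVec hzero]

lemma vecMulVec_sqrt_smul_self_star {r : ℝ} (hr : 0 ≤ r) :
    vecMulVec (((√r : ℝ) : ℂ) • v) (star (((√r : ℝ) : ℂ) • v)) =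
      (r : ℂ) • vecMulVec v (star v) := by
  rw [star_smul, smul_vecMulVec, vecMulVec_smul, smul_smul, Complex.star_def, Complex.conj_ofReal,
    ← Complex.ofReal_mul, Real.mul_self_sqrt hr]

variable {v} in
lemma isIncoherentlyConvertible_vecMulVec_sum_smul {N : ℕ} {m : Fin N → ℝ} (hm : ∀ k, 0 ≤ m k)
    {w : Fin N → Fin d → ℂ} (π : Fin N → Equiv.Perm (Fin d))
    (h : ∀ j, ∑ k, m k * Complex.normSq (w k (π k j)) ≤ Complex.normSq (v j)) :
    IsIncoherentlyConvertible (vecMulVec v (star v))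
      (∑ k, (m k : ℂ) • vecMulVec (w k) (star (w k))) := by
  simp only [← vecMulVec_sqrt_smul_self_star _ (hm _)]
  refine isIncoherentlyConvertible_vecMulVec_sum π fun j => ?_
  simpa only [Pi.smul_apply, smul_eq_mul, Complex.normSq_mul, Complex.normSq_ofReal,
    Real.mul_self_sqrt (hm _)] using h j

lemma exists_mem_segment_le_of_sub_le {c κ p q : ℝ} (hc : 0 ≤ c) (hκ : 0 ≤ κ) (hpq : c ≤ p + q)
    (hp : c * (1 - κ) ≤ 2 * p) (hq : c * (1 - κ) ≤ 2 * q) :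
    ∃ x ∈ segment ℝ (c * ((1 + κ) / 2)) (c * ((1 - κ) / 2)), x ≤ p ∧ c - x ≤ q := by
  have := mul_nonneg hc hκ
  rw [segment_symm, segment_eq_Icc (by linarith)]
  refine ⟨min p (c * ((1 + κ) / 2)), ⟨le_min (by linarith) (by linarith), min_le_right _ _⟩,
    min_le_left _ _, ?_⟩
  rw [sub_le_comm]
  exact le_min (by linarith) (by linarith)

lemma isIncoherentlyConvertible_smul_blochState {v : Fin 2 → ℂ} {c sx sy sz : ℝ}
    (hs : sx ^ 2 + sy ^ 2 + sz ^ 2 ≤ 1) (hc : 0 ≤ c)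
    (hcv : c ≤ ∑ j, Complex.normSq (v j))
    (hcoh : ∀ j, c * (1 - √(1 - (sx ^ 2 + sy ^ 2))) ≤ 2 * Complex.normSq (v j)) :
    IsIncoherentlyConvertible (vecMulVec v (star v)) ((c : ℂ) • blochState sx sy sz) := by
  set κ := √(1 - (sx ^ 2 + sy ^ 2))
  have hκ0 : 0 ≤ κ := Real.sqrt_nonneg _
  rw [Fin.sum_univ_two] at hcv
  obtain ⟨φ, χ, a, b, ha, hb, hab, hσ, hφ, hχ⟩ :=
    exists_blochState_eq_smul_vecMulVec_add_smul_vecMulVec hs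
  obtain ⟨hφ0, hφ1⟩ := normSq_of_blochState_eq_vecMulVec hφ
  obtain ⟨hχ0, hχ1⟩ := normSq_of_blochState_eq_vecMulVec hχ
  obtain ⟨_, ⟨e, f, he, hf, hef, rfl⟩, hv0, hv1⟩ :=
    exists_mem_segment_le_of_sub_le hc hκ0 hcv (hcoh 0) (hcoh 1)
  simp only [smul_eq_mul] at hv0 hv1
  have hefC : (e : ℂ) + f = 1 := by exact_mod_cast hef
  convert isIncoherentlyConvertible_vecMulVec_sum_smul (v := v)
    (m := ![c * e * a, c * f * b, c * f * a, c * e * b]) ?_ (w := ![φ, χ, φ, χ])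
    ![1, 1, Equiv.swap 0 1, Equiv.swap 0 1] ?_ using 1
  · simp only [Fin.sum_univ_four, cons_val, hσ]
    push_cast
    match_scalars
    · linear_combination -((c : ℂ) * a) * hefC
    · linear_combination -((c : ℂ) * b) * hefC
  · simp only [Fin.forall_fin_succ, IsEmpty.forall_iff, and_true, cons_val_zero, cons_val_succ]
    exact ⟨by positivity, by positivity, by positivity, by positivity⟩
  · simp only [Fin.forall_fin_two, Fin.sum_univ_four, cons_val, Equiv.Perm.one_apply,
      Equiv.swap_apply_left, Equiv.swap_apply_right, hφ0, hφ1, hχ0, hχ1]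
    have hb' : b = 1 - a := by linarith
    have hf' : f = 1 - e := by linarith
    subst hb' hf'
    constructor <;> linarith

end IncoherentConversion

section Necessity

lemma norm_sq_offDiag_le {X : Matrix (Fin 2) (Fin 2) ℂ} (hX : X.PosSemidef) :
    ‖X 0 1‖ ^ 2 ≤ (X 0 0).re * (X 1 1).re := by
  have hdet := (Complex.nonneg_iff.1 hX.det_nonneg).1
  rw [det_fin_two, ← hX.isHermitian.apply 1 0, ← hX.isHermitian.coe_re_apply_self 0,
    ← hX.isHermitian.coe_re_apply_self 1, Complex.star_def, Complex.mul_conj] at hdet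
  rw [← Complex.normSq_eq_norm_sq, ← sub_nonneg]
  simpa using hdet

lemma IsIncoherentKraus.offDiag_eq_zero_or_exists_perm {K : Matrix (Fin 2) (Fin 2) ℂ}
    (hK : IsIncoherentKraus K) (W : Matrix (Fin 2) (Fin 2) ℂ) :
    (K * W * Kᴴ) 0 1 = 0 ∨
      ∃ π : Equiv.Perm (Fin 2), ∀ j, (K * W * Kᴴ) (π j) (π j) = (Kᴴ * K) j j * W j j := by
  have hcol (j : Fin 2) : K 0 j = 0 ∨ K 1 j = 0 :=
    or_iff_not_and_not.2 fun h => zero_ne_one (hK j 0 1 h.1 h.2)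
  simp only [Fin.forall_fin_two, mul_apply, conjTranspose_apply, Fin.sum_univ_two]
  rcases hcol 0 with h0 | h0 <;> rcases hcol 1 with h1 | h1 <;>
    simp only [h0, h1, star_zero, zero_mul, mul_zero, add_zero, zero_add, true_or]
  · refine .inr ⟨Equiv.swap 0 1, ?_, ?_⟩ <;>
      simp only [Equiv.swap_apply_left, Equiv.swap_apply_right, h0, h1, star_zero, zero_mul,
        mul_zero, add_zero, zero_add] <;> ring
  · refine .inr ⟨1, ?_, ?_⟩ <;>
      simp only [Equiv.Perm.one_apply, h0, h1, star_zero, zero_mul, mul_zero, add_zero,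
        zero_add] <;> ring

lemma IsIncoherentKraus.exists_norm_sq_offDiag_le {K W : Matrix (Fin 2) (Fin 2) ℂ}
    (hK : IsIncoherentKraus K) (hW : W.PosSemidef) :
    ∃ a : Fin 2 → ℝ, (∀ j, 0 ≤ a j ∧ a j ≤ ((Kᴴ * K) j j).re * (W j j).re) ∧
      ∑ j, a j ≤ (K * W * Kᴴ).trace.re ∧ ‖(K * W * Kᴴ) 0 1‖ ^ 2 ≤ a 0 * a 1 := by
  have hX := hW.mul_mul_conjTranspose_same K
  have hnonneg (j : Fin 2) : 0 ≤ ((Kᴴ * K) j j).re * (W j j).re :=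
    mul_nonneg (Complex.nonneg_iff.1 (posSemidef_conjTranspose_mul_self K).diag_nonneg).1
      (Complex.nonneg_iff.1 hW.diag_nonneg).1
  rcases hK.offDiag_eq_zero_or_exists_perm W with h | ⟨π, hπ⟩
  · exact ⟨0, fun j => ⟨le_rfl, hnonneg j⟩,
      by simpa using (Complex.nonneg_iff.1 hX.trace_nonneg).1, by simp [h]⟩
  · have hre (j : Fin 2) :
        ((K * W * Kᴴ) (π j) (π j)).re = ((Kᴴ * K) j j).re * (W j j).re := by
      have hWj : W j j = ((W j j).re : ℂ) := (hW.isHermitian.coe_re_apply_self j).symm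
      rw [hπ, hWj, Complex.re_mul_ofReal, Complex.ofReal_re]
    refine ⟨_, fun j => ⟨hnonneg j, le_rfl⟩, ?_, ?_⟩
    · simp only [← hre]
      rw [Equiv.sum_comp π fun i => ((K * W * Kᴴ) i i).re, ← Complex.re_sum]
      rfl
    · rw [← hre, ← hre, ← Fin.prod_univ_two fun j => ((K * W * Kᴴ) (π j) (π j)).re,
        Equiv.prod_comp π fun i => ((K * W * Kᴴ) i i).re, Fin.prod_univ_two]
      exact norm_sq_offDiag_le hX

lemma IsIncoherentlyConvertible.exists_norm_sq_offDiag_le {W X : Matrix (Fin 2) (Fin 2) ℂ}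
    (h : IsIncoherentlyConvertible W X) (hW : W.PosSemidef) :
    ∃ a : Fin 2 → ℝ, (∀ j, 0 ≤ a j ∧ a j ≤ (W j j).re) ∧
      ∑ j, a j ≤ X.trace.re ∧ ‖X 0 1‖ ^ 2 ≤ a 0 * a 1 := by
  obtain ⟨N, K, hK, hsub, rfl⟩ := h
  choose a ha htr hoff using fun n => (hK n).exists_norm_sq_offDiag_le hW
  refine ⟨fun j => ∑ n, a n j, fun j => ⟨Finset.sum_nonneg fun n _ => (ha n j).1, ?_⟩, ?_, ?_⟩
  · have hdiag : ∑ n, (((K n)ᴴ * K n) j j).re ≤ 1 := by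
      have := (Complex.nonneg_iff.1 (hsub.diag_nonneg (i := j))).1
      simpa only [Matrix.sub_apply, Matrix.sum_apply, one_apply_eq, Complex.sub_re, Complex.one_re,
        Complex.re_sum, sub_nonneg] using this
    calc ∑ n, a n j ≤ ∑ n, (((K n)ᴴ * K n) j j).re * (W j j).re :=
          Finset.sum_le_sum fun n _ => (ha n j).2
      _ ≤ (W j j).re := by
          rw [← Finset.sum_mul]
          exact mul_le_of_le_one_left (Complex.nonneg_iff.1 hW.diag_nonneg).1 hdiag
  · rw [Finset.sum_comm, trace_sum, Complex.re_sum]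
    exact Finset.sum_le_sum fun n _ => htr n
  · calc ‖(∑ n, K n * W * (K n)ᴴ) 0 1‖ ^ 2 ≤ (∑ n, ‖(K n * W * (K n)ᴴ) 0 1‖) ^ 2 := by
          rw [Matrix.sum_apply]
          gcongr
          exact norm_sum_le _ _
      _ ≤ (∑ n, a n 0) * ∑ n, a n 1 :=
          Finset.sum_sq_le_sum_mul_sum_of_sq_le_mul _ (fun n _ => (ha n 0).1)
            (fun n _ => (ha n 1).1) fun n _ => hoff n

open scoped MatrixOrder in
lemma trace_mul_nonneg {n : Type*} [Fintype n] {A B : Matrix n n ℂ} (hA : A.PosSemidef)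
    (hB : B.PosSemidef) : 0 ≤ (A * B).trace := by
  obtain ⟨C, rfl⟩ := CStarAlgebra.nonneg_iff_eq_star_mul_self.mp hB.nonneg
  have := (hA.mul_mul_conjTranspose_same C).trace_nonneg
  rwa [trace_mul_cycle, trace_mul_comm] at this

lemma mul_one_sub_sqrt_le_two_mul {A B c r : ℝ} (hc : 0 ≤ c) (hAB : A + B ≤ c) (hA : 0 ≤ A)
    (h : c ^ 2 * r ≤ 4 * (A * B)) : c * (1 - √(1 - r)) ≤ 2 * A := by
  have : (c - 2 * A) ^ 2 ≤ c ^ 2 * (1 - r) := by nlinarith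
  have := Real.le_sqrt_of_sq_le this
  rw [Real.sqrt_mul (sq_nonneg c), Real.sqrt_sq hc] at this
  linarith

lemma IsIncoherentlyConvertible.re_trace_le {d : ℕ} {W X : Matrix (Fin d) (Fin d) ℂ}
    (h : IsIncoherentlyConvertible W X) (hW : W.PosSemidef) : X.trace.re ≤ W.trace.re := by
  obtain ⟨N, K, -, hsub, rfl⟩ := h
  have htrace : (∑ n, K n * W * (K n)ᴴ).trace = ((∑ n, (K n)ᴴ * K n) * W).trace := by
    rw [Finset.sum_mul, trace_sum, trace_sum]
    exact Finset.sum_congr rfl fun n _ => trace_mul_cycle _ _ _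
  have := (Complex.nonneg_iff.1 (trace_mul_nonneg hsub hW)).1
  rwa [Matrix.sub_mul, Matrix.one_mul, trace_sub, Complex.sub_re, sub_nonneg, ← htrace] at this

lemma IsIncoherentlyConvertible.mul_one_sub_sqrt_le {W : Matrix (Fin 2) (Fin 2) ℂ}
    {c sx sy sz : ℝ} (h : IsIncoherentlyConvertible W ((c : ℂ) • blochState sx sy sz))
    (hW : W.PosSemidef) (hc : 0 ≤ c) (j : Fin 2) :
    c * (1 - √(1 - (sx ^ 2 + sy ^ 2))) ≤ 2 * (W j j).re := by
  obtain ⟨a, ha, htr, hoff⟩ := h.exists_norm_sq_offDiag_le hW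
  rw [trace_smul, trace_blochState, smul_eq_mul, mul_one, Complex.ofReal_re,
    Fin.sum_univ_two] at htr
  have hnorm : ‖((c : ℂ) • blochState sx sy sz) 0 1‖ ^ 2 = c ^ 2 * (sx ^ 2 + sy ^ 2) / 4 := by
    rw [Matrix.smul_apply, norm_smul, mul_pow, Complex.norm_real, Real.norm_eq_abs, sq_abs,
      norm_sq_blochState_offDiag, mul_div_assoc]
  rw [hnorm, div_le_iff₀' (by norm_num)] at hoff
  have hle (B : ℝ) (hAB : a j + B ≤ c) (hprod : a 0 * a 1 = a j * B) :
      c * (1 - √(1 - (sx ^ 2 + sy ^ 2))) ≤ 2 * (W j j).re := by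
    have := mul_one_sub_sqrt_le_two_mul hc hAB (ha j).1 (hprod ▸ hoff)
    linarith [(ha j).2]
  fin_cases j
  · exact hle (a 1) htr rfl
  · exact hle (a 0) ((add_comm _ _).trans_le htr) (mul_comm _ _)

end Necessity

section AssistedConversion

variable {dA dB : ℕ}

/-- Bob's unnormalised state after Alice obtains the outcome with POVM element `M`; its trace is the
probability of that outcome. -/
noncomputable def steeredState (ψ : Fin dA × Fin dB → ℂ) (M : Matrix (Fin dA) (Fin dA) ℂ) :
    Matrix (Fin dB) (Fin dB) ℂ :=
  ptraceA ((M ⊗ₖ (1 : Matrix (Fin dB) (Fin dB) ℂ)) * vecMulVec ψ (star ψ))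

/-- The success probabilities of the assisted protocols taking `ψ` to `σ`: Alice measures a POVM
`M`, and on outcome `i` Bob prepares `σ` with joint probability `c i` (for `σ` of unit trace). -/
def assistedConversionProbabilities (ψ : Fin dA × Fin dB → ℂ) (σ : Matrix (Fin dB) (Fin dB) ℂ) :
    Set ℝ :=
  {x | ∃ (m : ℕ) (M : Fin m → Matrix (Fin dA) (Fin dA) ℂ) (c : Fin m → ℝ),
    (∀ i, (M i).IsHermitian) ∧ (∀ i, (M i).PosSemidef) ∧ (∑ i, M i = 1) ∧ (∀ i, 0 ≤ c i) ∧
    (∀ i, IsIncoherentlyConvertible (steeredState ψ (M i)) ((c i : ℂ) • σ)) ∧ x = ∑ i, c i}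

variable (ψ : Fin dA × Fin dB → ℂ)

lemma steeredState_eq_transpose (M : Matrix (Fin dA) (Fin dA) ℂ) :
    steeredState ψ M =
      ((of (Function.curry ψ))ᴴ * M * of (Function.curry ψ))ᵀ := by
  ext j j'
  simp only [steeredState, ptraceA, mul_vecMulVec, vecMulVec_apply, mulVec, dotProduct,
    kroneckerMap_apply, one_apply, Fintype.sum_prod_type, transpose_apply, Matrix.mul_assoc,
    mul_apply (M := (of (Function.curry ψ))ᴴ), mul_apply (M := M), conjTranspose_apply, of_apply,
    Function.curry_apply, mul_ite, mul_one, mul_zero, ite_mul, zero_mul, Finset.sum_ite_eq,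
    Finset.mem_univ, if_true, Pi.star_apply]
  exact Finset.sum_congr rfl fun i _ => mul_comm _ _

lemma steeredState_one : steeredState ψ 1 = ptraceA (vecMulVec ψ (star ψ)) := by
  rw [steeredState, one_kronecker_one, Matrix.one_mul]

lemma sum_steeredState {m : ℕ} {M : Fin m → Matrix (Fin dA) (Fin dA) ℂ} (hM : ∑ i, M i = 1) :
    ∑ i, steeredState ψ (M i) = ptraceA (vecMulVec ψ (star ψ)) := by
  simp only [← steeredState_one, steeredState_eq_transpose, ← hM, Matrix.mul_sum, Matrix.sum_mul,
    transpose_sum]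

lemma posSemidef_steeredState {M : Matrix (Fin dA) (Fin dA) ℂ} (hM : M.PosSemidef) :
    (steeredState ψ M).PosSemidef := by
  rw [steeredState_eq_transpose]
  exact (hM.conjTranspose_mul_mul_same _).transpose

lemma steeredState_vecMulVec_star_self (u : Fin dA → ℂ) :
    steeredState ψ (vecMulVec (star u) u) =
      vecMulVec (u ᵥ* of (Function.curry ψ)) (star (u ᵥ* of (Function.curry ψ))) := by
  rw [steeredState_eq_transpose, mul_vecMulVec, vecMulVec_mul, transpose_vecMulVec, star_vecMul]

lemma ptraceA_vecMulVec_star_self_apply_self (j : Fin dB) :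
    ptraceA (vecMulVec ψ (star ψ)) j j = ((∑ i, Complex.normSq (ψ (i, j)) : ℝ) : ℂ) := by
  simp only [ptraceA, vecMulVec_apply, Pi.star_apply, Complex.star_def, Complex.mul_conj,
    Complex.ofReal_sum]

variable {ψ} in
lemma le_re_trace_of_mem_assistedConversionProbabilities {x : ℝ}
    {σ : Matrix (Fin dB) (Fin dB) ℂ} (hσ : σ.trace = 1)
    (hx : x ∈ assistedConversionProbabilities ψ σ) :
    x ≤ (ptraceA (vecMulVec ψ (star ψ))).trace.re := by
  obtain ⟨m, M, c, -, hM, hsum, -, hconv, rfl⟩ := hx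
  rw [← sum_steeredState ψ hsum, trace_sum, Complex.re_sum]
  refine Finset.sum_le_sum fun i _ => ?_
  simpa only [trace_smul, hσ, smul_eq_mul, mul_one, Complex.ofReal_re] using
    (hconv i).re_trace_le (posSemidef_steeredState ψ (hM i))

variable {ψ : Fin dA × Fin 2 → ℂ} {x sx sy sz : ℝ}

lemma mul_one_sub_sqrt_le_of_mem_assistedConversionProbabilities
    (hx : x ∈ assistedConversionProbabilities ψ (blochState sx sy sz)) (j : Fin 2) :
    x * (1 - √(1 - (sx ^ 2 + sy ^ 2))) ≤ 2 * (ptraceA (vecMulVec ψ (star ψ)) j j).re := by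
  obtain ⟨m, M, c, -, hM, hsum, hc, hconv, rfl⟩ := hx
  rw [← sum_steeredState ψ hsum, Matrix.sum_apply, Complex.re_sum, Finset.sum_mul, Finset.mul_sum]
  exact Finset.sum_le_sum fun i _ =>
    (hconv i).mul_one_sub_sqrt_le (posSemidef_steeredState ψ (hM i)) (hc i) j

lemma mem_assistedConversionProbabilities
    (hψ : (ptraceA (vecMulVec ψ (star ψ))).trace = 1) (hs : sx ^ 2 + sy ^ 2 + sz ^ 2 ≤ 1)
    (hx0 : 0 ≤ x) (hx1 : x ≤ 1)
    (hx : ∀ j, x * (1 - √(1 - (sx ^ 2 + sy ^ 2))) ≤ 2 * (ptraceA (vecMulVec ψ (star ψ)) j j).re) :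
    x ∈ assistedConversionProbabilities ψ (blochState sx sy sz) := by
  set Ψ : Matrix (Fin dA) (Fin 2) ℂ := of (Function.curry ψ)
  have hρ (j : Fin 2) : ptraceA (vecMulVec ψ (star ψ)) j j =
      ((∑ i, Complex.normSq (Ψ i j) : ℝ) : ℂ) := ptraceA_vecMulVec_star_self_apply_self ψ j
  have hΨ : ∑ j, ∑ i, Complex.normSq (Ψ i j) = 1 := by
    simp only [trace, diag_apply, hρ] at hψ
    exact_mod_cast hψ
  simp only [hρ, Complex.ofReal_re] at hx
  obtain ⟨U, hU, hprop⟩ := exists_unitary_normSq_rows_proportional Ψ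
  simp only [hΨ, one_mul] at hprop
  set t : Fin dA → ℝ := fun k => ∑ j, Complex.normSq ((U * Ψ) k j)
  have ht0 (k : Fin dA) : 0 ≤ t k := Finset.sum_nonneg fun j _ => Complex.normSq_nonneg _
  refine ⟨dA, fun k => vecMulVec (star (U k)) (U k), fun k => x * t k,
    fun k => (posSemidef_vecMulVec_star_self (U k)).isHermitian,
    fun k => posSemidef_vecMulVec_star_self (U k), sum_vecMulVec_star_row hU,
    fun k => mul_nonneg hx0 (ht0 k), fun k => ?_, ?_⟩
  · rw [steeredState_vecMulVec_star_self]
    refine isIncoherentlyConvertible_smul_blochState hs (mul_nonneg hx0 (ht0 k))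
      (mul_le_of_le_one_left (ht0 k) hx1) fun j => ?_
    calc x * t k * (1 - √(1 - (sx ^ 2 + sy ^ 2)))
        = x * (1 - √(1 - (sx ^ 2 + sy ^ 2))) * t k := by ring
      _ ≤ 2 * (∑ i, Complex.normSq (Ψ i j)) * t k := mul_le_mul_of_nonneg_right (hx j) (ht0 k)
      _ = 2 * Complex.normSq ((U * Ψ) k j) := by rw [mul_assoc, hprop]
  · rw [← Finset.mul_sum, Finset.sum_comm]
    simp only [sum_normSq_unitary_mul_apply hU, hΨ, mul_one]

end AssistedConversion

theorem assisted_conversion_optimal_probability_general {d : ℕ} (ψ : Fin d × Fin 2 → ℂ)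
    (rx ry rz : ℝ) (hB : ptraceA (vecMulVec ψ (star ψ)) = blochState rx ry rz)
    (sx sy sz : ℝ) (hs : sx ^ 2 + sy ^ 2 + sz ^ 2 ≤ 1) (hsc : 0 < sx ^ 2 + sy ^ 2) :
    IsGreatest (assistedConversionProbabilities ψ (blochState sx sy sz))
      (min 1 ((1 - |rz|) * (1 + √(1 - (sx ^ 2 + sy ^ 2))) / (sx ^ 2 + sy ^ 2))) := by
  set κ := √(1 - (sx ^ 2 + sy ^ 2))
  have hκ0 : 0 ≤ κ := Real.sqrt_nonneg _
  have hκ2 : κ ^ 2 = 1 - (sx ^ 2 + sy ^ 2) := Real.sq_sqrt (by nlinarith [sq_nonneg sz])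
  have hκ1 : 0 < 1 - κ := by nlinarith
  have hformula : (1 - |rz|) * (1 + κ) / (sx ^ 2 + sy ^ 2) = (1 - |rz|) / (1 - κ) := by
    rw [div_eq_div_iff hsc.ne' hκ1.ne']
    linear_combination (-(1 - |rz|)) * hκ2
  have htrace : (ptraceA (vecMulVec ψ (star ψ))).trace = 1 := by rw [hB, trace_blochState]
  have hle_iff (x : ℝ) : x ≤ (1 - |rz|) / (1 - κ) ↔
      ∀ j, x * (1 - κ) ≤ 2 * (ptraceA (vecMulVec ψ (star ψ)) j j).re := by
    have h0 : (blochState rx ry rz 0 0).re = (1 + rz) / 2 := by simp [blochState]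
    have h1 : (blochState rx ry rz 1 1).re = (1 - rz) / 2 := by simp [blochState]
    rw [le_div_iff₀ hκ1, hB, Fin.forall_fin_two, h0, h1, le_sub_comm, abs_le]
    constructor <;> rintro ⟨_, _⟩ <;> constructor <;> linarith
  rw [hformula]
  refine ⟨mem_assistedConversionProbabilities htrace hs ?_ (min_le_left _ _)
    ((hle_iff _).1 (min_le_right _ _)), fun x hx => le_min ?_ <| (hle_iff x).2
      (mul_one_sub_sqrt_le_of_mem_assistedConversionProbabilities hx)⟩
  · refine le_min zero_le_one ((hle_iff 0).2 fun j => ?_)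
    rw [zero_mul, ptraceA_vecMulVec_star_self_apply_self, Complex.ofReal_re]
    exact mul_nonneg zero_le_two (Finset.sum_nonneg fun i _ => Complex.normSq_nonneg _)
  · simpa only [htrace, Complex.one_re] using
      le_re_trace_of_mem_assistedConversionProbabilities (trace_blochState _ _ _) hx

/-- **Theorem 2 (paper), operational form.** For a shared pure two-qubit state `ψ`, the
supremum of the success probability over all one-way LQICC protocols (a POVM on Alice's
qubit followed by outcome-dependent stochastic incoherent operations on Bob's side)
converting the shared state into the target qubit state `σ` equals
`min{1, (1-|rz|)(1+√(1-s²))/s²}`. -/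
theorem assisted_conversion_optimal_probability
    (ψ : Fin 2 × Fin 2 → ℂ) (hψ : ∑ x, Complex.normSq (ψ x) = 1)
    (rx ry rz : ℝ)
    (hB : ptraceA (Matrix.vecMulVec ψ (star ψ)) = blochState rx ry rz)
    (sx sy sz : ℝ) (hs : sx ^ 2 + sy ^ 2 + sz ^ 2 ≤ 1) (hsc : 0 < sx ^ 2 + sy ^ 2)
    (T : Set ℝ)
    (hT : T = {x : ℝ | ∃ (m : ℕ) (M : Fin m → Matrix (Fin 2) (Fin 2) ℂ)
        (c : Fin m → ℝ),
      (∀ i, (M i).IsHermitian) ∧ (∀ i, (M i).PosSemidef) ∧ (∑ i, M i = 1) ∧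
      (∀ i, 0 ≤ c i) ∧
      (∀ i, ∃ (N : ℕ) (K : Fin N → Matrix (Fin 2) (Fin 2) ℂ),
        (∀ n, IsIncoherentKraus (K n)) ∧
        ((1 : Matrix (Fin 2) (Fin 2) ℂ) - ∑ n, (K n)ᴴ * K n).PosSemidef ∧
        ∑ n, K n * ptraceA ((M i ⊗ₖ (1 : Matrix (Fin 2) (Fin 2) ℂ)) *
            Matrix.vecMulVec ψ (star ψ)) * (K n)ᴴ = (c i : ℂ) • blochState sx sy sz) ∧
      x = ∑ i, c i}) :
    sSup T = min 1 ((1 - |rz|) * (1 + Real.sqrt (1 - (sx ^ 2 + sy ^ 2))) /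
        (sx ^ 2 + sy ^ 2)) :=
  hT ▸ (assisted_conversion_optimal_probability_general ψ rx ry rz hB sx sy sz hs hsc).csSup_eq
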